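/- Let t ≥ 1 be an integer, let q ∈ ℂ with 0 < |q| < 1, and let x ∈ ℂ with x ≠ 0 and x·q^n ≠ 1 for every nonzero integer n. Then q^{-t} Σ_{1 ≤ k_1 ≤ … ≤ k_t} (xq;q)_{k_t-1} (q/x;q)_{k_t-1} q^{k_t} Π_{i=1}^{t-1} q^{k_i^2} [k_{i+1} + k_i - i + 2Σ_{j=1}^{i-1} k_j choose k_{i+1} - k_i]_q = -q^{-t/2 - 1/8} · ((xq;q)_∞ (q/x;q)_∞ / ((q;q)_∞)^2) · ( Σ_{r,s ≥ 0, r ≢ s (mod 2)} - Σ_{r,s < 0, r ≢ s (mod 2)} ) (-1)^{(r-s-1)/2} q^{r^2/8 + (4t+3)rs/4 + s^2/8 + (2+t)r/2 + t s/2} / (1 - x q^{(r+s+1)/2}), where each of the series converges absolutely. Note that for integers r ≢ s (mod 2), the quantities (r-s-1)/2 and (r+s+1)/2 are integers, and the total exponent of q in each term (including the prefactor exponent -t/2 - 1/8) is an integer. -/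

import Mathlib

open Finset

/-- The finite q-Pochhammer symbol `(a;q)_n`. -/
noncomputable def qPoch (q a : ℂ) (n : ℕ) : ℂ := ∏ j ∈ Finset.range n, (1 - a * q ^ j)

/-- The infinite q-Pochhammer symbol `(a;q)_∞`. -/
noncomputable def qPochInf (q a : ℂ) : ℂ := ∏' j : ℕ, (1 - a * q ^ j)

/-- The Gaussian binomial coefficient `[n choose k]_q`, zero outside `0 ≤ k ≤ n`. -/
noncomputable def qBinom (q : ℂ) (n k : ℤ) : ℂ :=
  if 0 ≤ k ∧ k ≤ n then
    ∏ j ∈ Finset.range k.toNat, (1 - q ^ (n - k + (j : ℤ) + 1)) / (1 - q ^ ((j : ℤ) + 1))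
  else 0

/-- The product `Π_{i=1}^{t-1} q^{k_i^2} [k_{i+1}+k_i-i+2Σ_{j<i}k_j choose k_{i+1}-k_i]_q`
appearing in the generalized U-function `U_t` (tuple of length `t+1`, i.e. the paper's
`t` equals `t+1`). -/
noncomputable def UtProd (q : ℂ) (t : ℕ) (K : Fin (t+1) → ℕ) : ℂ :=
  ∏ i : Fin t, (q ^ (K i.castSucc ^ 2) *
    qBinom q ((K i.succ : ℤ) + (K i.castSucc : ℤ) - ((i : ℕ) + 1)
        + 2 * ∑ j ∈ Finset.univ.filter (fun j : Fin (t+1) => (j : ℕ) < (i : ℕ)), (K j : ℤ))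
      ((K i.succ : ℤ) - (K i.castSucc : ℤ)))

/-- The summand of the multisum defining `U_t(-x;q)`, indexed by weakly increasing
tuples `1 ≤ k_1 ≤ … ≤ k_t`. -/
noncomputable def UtTerm (q x : ℂ) (t : ℕ) (K : Fin (t+1) → ℕ) : ℂ :=
  qPoch q (x * q) (K (Fin.last t) - 1) * qPoch q (q / x) (K (Fin.last t) - 1) *
    q ^ (K (Fin.last t)) * UtProd q t K

/-- The Hecke-type summand: `(-1)^{(r-s-1)/2} q^{E} / (1 - x q^{(r+s+1)/2})` where the
integer exponent `E = r²/8 + (4t+3)rs/4 + s²/8 + (2+t)r/2 + ts/2 - t/2 - 1/8` (the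
prefactor exponent `-t/2 - 1/8` has been absorbed, making the total exponent of `q`
an integer, as noted in the statement); here the paper's `t` is `T`. -/
noncomputable def heckeTerm (q x : ℂ) (T : ℤ) (p : ℤ × ℤ) : ℂ :=
  (-1 : ℂ) ^ ((p.1 - p.2 - 1) / 2) *
    q ^ ((p.1 ^ 2 + p.2 ^ 2 + 2 * (4 * T + 3) * p.1 * p.2
          + 4 * (2 + T) * p.1 + 4 * T * p.2 - 4 * T - 1) / 8) /
    (1 - x * q ^ ((p.1 + p.2 + 1) / 2))

/-- `(q;q)_n`. -/
noncomputable def Qn (q : ℂ) (n : ℕ) : ℂ := ∏ j ∈ Finset.range n, (1 - q ^ (j+1))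

theorem Qn_zero (q : ℂ) : Qn q 0 = 1 := by simp [Qn]
theorem Qn_succ (q : ℂ) (n : ℕ) : Qn q (n+1) = Qn q n * (1 - q ^ (n+1)) := by
  simp [Qn, Finset.prod_range_succ]
theorem qPoch_zero (q a : ℂ) : qPoch q a 0 = 1 := by simp [qPoch]
theorem qPoch_succ (q a : ℂ) (n : ℕ) : qPoch q a (n+1) = qPoch q a n * (1 - a * q ^ n) := by
  simp [qPoch, Finset.prod_range_succ]
theorem qPoch_succ' (q a : ℂ) (n : ℕ) : qPoch q a (n+1) = (1 - a) * qPoch q (a*q) n := by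
  simp only [qPoch, Finset.prod_range_succ']
  rw [mul_comm]
  congr 1
  · simp
  · apply Finset.prod_congr rfl; intro j _; ring
theorem qPoch_self (q : ℂ) (n : ℕ) : qPoch q q n = Qn q n := by
  unfold qPoch Qn; apply Finset.prod_congr rfl; intro j _; ring

theorem one_sub_pow_ne {q : ℂ} (hq1 : ‖q‖ < 1) (n : ℕ) : (1 : ℂ) - q ^ (n+1) ≠ 0 := by
  intro h
  have h1 : ‖q ^ (n+1)‖ = 1 := by rw [← sub_eq_zero.mp h]; simp
  rw [norm_pow] at h1
  have := pow_lt_one₀ (norm_nonneg q) hq1 (by omega : n+1 ≠ 0)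
  linarith

theorem Qn_ne {q : ℂ} (hq1 : ‖q‖ < 1) (n : ℕ) : Qn q n ≠ 0 := by
  unfold Qn
  exact Finset.prod_ne_zero_iff.mpr fun j _ => one_sub_pow_ne hq1 j

/-- Pascal: `1/((q)_j (q)_{M+1-j})`, convolution step. -/
theorem pascal_sum {q : ℂ} (hq1 : ‖q‖ < 1) (M : ℕ) (F : ℕ → ℂ) :
    (1 - q^(M+1)) * ∑ j ∈ range (M+2), F j / (Qn q (M+1-j) * Qn q j) =
    ∑ j ∈ range (M+1), (q^j * F j + F (j+1)) / (Qn q (M-j) * Qn q j) := by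
  have key : ∀ j ∈ range (M+2), (1 - q^(M+1)) * (F j / (Qn q (M+1-j) * Qn q j)) =
      q^j * F j * (1 - q^(M+1-j)) / (Qn q (M+1-j) * Qn q j) +
      F j * (1 - q^j) / (Qn q (M+1-j) * Qn q j) := by
    intro j hj
    have hj' : j ≤ M+1 := by simp at hj; omega
    have : q^(M+1) = q^j * q^(M+1-j) := by rw [← pow_add]; congr 1; omega
    rw [this]; ring
  rw [Finset.mul_sum, Finset.sum_congr rfl key, Finset.sum_add_distrib]
  simp only [add_div]
  rw [Finset.sum_add_distrib]
  congr 1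
  · rw [Finset.sum_range_succ]
    simp only [Nat.sub_self, pow_zero, sub_self, mul_zero, zero_div, add_zero]
    apply Finset.sum_congr rfl
    intro j hj
    have hj' : j ≤ M := by simp at hj; omega
    have e : M+1-j = (M-j)+1 := by omega
    rw [e, Qn_succ]
    have h1 := Qn_ne hq1 (M-j); have h2 := Qn_ne hq1 j; have h3 := one_sub_pow_ne hq1 (M-j)
    field_simp
  · rw [Finset.sum_range_succ']
    simp only [pow_zero, sub_self, mul_zero, zero_div, add_zero]
    apply Finset.sum_congr rfl
    intro j hj
    have e : M+1-(j+1) = M-j := by omega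
    rw [e, Qn_succ]
    have h1 := Qn_ne hq1 (M-j); have h2 := Qn_ne hq1 j; have h3 := one_sub_pow_ne hq1 j
    field_simp

/-- q-Vandermonde. -/
theorem vand {q : ℂ} (hq1 : ‖q‖ < 1) (M : ℕ) : ∀ c : ℕ,
    ∑ j ∈ range (M+1), q^(j^2+c*j) / (Qn q (M-j) * Qn q j * Qn q (j+c)) =
      1 / (Qn q M * Qn q (M+c)) := by
  induction M with
  | zero => intro c; simp [Qn_zero]
  | succ M ih =>
    intro c
    have h := pascal_sum hq1 M (fun j => q^(j^2+c*j) / Qn q (j+c))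
    have e1 : ∀ j ∈ range (M+1), (q^j * (q^(j^2+c*j) / Qn q (j+c)) +
        q^((j+1)^2+c*(j+1)) / Qn q (j+1+c)) / (Qn q (M-j) * Qn q j) =
        q^(j^2+(c+1)*j) / (Qn q (M-j) * Qn q j * Qn q (j+(c+1))) := by
      intro j _
      have e2 : j+1+c = (j+c)+1 := by ring
      have e3 : j+(c+1) = (j+c)+1 := by ring
      rw [e2, e3, Qn_succ]
      have h1 := Qn_ne hq1 (M-j); have h2 := Qn_ne hq1 j; have h3 := one_sub_pow_ne hq1 (j+c)
      have h4 := Qn_ne hq1 (j+c)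
      field_simp
      ring
    rw [Finset.sum_congr rfl e1, ih (c+1)] at h
    have h1 := Qn_ne hq1 M; have h3 := one_sub_pow_ne hq1 M
    have h4 := Qn_ne hq1 (M+(c+1))
    have e4 : M+1+c = M+(c+1) := by ring
    rw [e4, Qn_succ]
    have h5 : ∑ j ∈ range (M+1+1), q^(j^2+c*j) / (Qn q (M+1-j) * Qn q j * Qn q (j+c)) =
       ∑ j ∈ range (M+2), (q^(j^2+c*j) / Qn q (j+c)) / (Qn q (M+1-j) * Qn q j) := by
      apply Finset.sum_congr rfl; intro j _; rw [div_div]; congr 1; ring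
    rw [h5]
    apply mul_left_cancel₀ h3
    rw [h]
    field_simp

theorem vandA {q : ℂ} (hq1 : ‖q‖ < 1) (M : ℕ) : ∀ a : ℂ,
    ∑ j ∈ range (M+1), qPoch q a (M-j) * a^j / (Qn q (M-j) * Qn q j) = 1 / Qn q M := by
  induction M with
  | zero => intro a; simp [Qn_zero, qPoch_zero]
  | succ M ih =>
    intro a
    have h := pascal_sum hq1 M (fun j => qPoch q a (M+1-j) * a^j)
    have e1 : ∀ j ∈ range (M+1), (q^j * (qPoch q a (M+1-j) * a^j) +
        qPoch q a (M+1-(j+1)) * a^(j+1)) / (Qn q (M-j) * Qn q j) =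
        (1 - a) * (qPoch q (a*q) (M-j) * (a*q)^j / (Qn q (M-j) * Qn q j)) +
        a * (qPoch q a (M-j) * a^j / (Qn q (M-j) * Qn q j)) := by
      intro j hj
      have hj' : j ≤ M := by simp at hj; omega
      have e : M+1-j = (M-j)+1 := by omega
      have e' : M+1-(j+1) = M-j := by omega
      rw [e, e', qPoch_succ', mul_pow]
      ring
    rw [Finset.sum_congr rfl e1, Finset.sum_add_distrib, ← Finset.mul_sum, ← Finset.mul_sum,
      ih a, ih (a*q)] at h
    have h1 := Qn_ne hq1 M; have h3 := one_sub_pow_ne hq1 M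
    apply mul_left_cancel₀ h3
    rw [h, Qn_succ]
    field_simp
    ring

/-- q-binomial theorem. -/
theorem qbinthm {q : ℂ} (hq1 : ‖q‖ < 1) (M : ℕ) : ∀ z : ℂ,
    ∑ j ∈ range (M+1), (-1)^j * q^(j.choose 2) * z^j / (Qn q (M-j) * Qn q j) =
      qPoch q z M / Qn q M := by
  induction M with
  | zero => intro a; simp [Qn_zero, qPoch_zero]
  | succ M ih =>
    intro z
    have h := pascal_sum hq1 M (fun j => (-1)^j * q^(j.choose 2) * z^j)
    have e1 : ∀ j ∈ range (M+1), (q^j * ((-1)^j * q^(j.choose 2) * z^j) +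
        (-1)^(j+1) * q^((j+1).choose 2) * z^(j+1)) / (Qn q (M-j) * Qn q j) =
        (1 - z) * ((-1)^j * q^(j.choose 2) * (z*q)^j / (Qn q (M-j) * Qn q j)) := by
      intro j hj
      have e : (j+1).choose 2 = j + j.choose 2 := by
        rw [Nat.choose_succ_succ' j 1, Nat.choose_one_right]
      rw [e, mul_pow, pow_add]
      ring
    rw [Finset.sum_congr rfl e1, ← Finset.mul_sum, ih (z*q)] at h
    have h1 := Qn_ne hq1 M; have h3 := one_sub_pow_ne hq1 M
    apply mul_left_cancel₀ h3
    rw [h, Qn_succ, qPoch_succ']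
    field_simp
/-- coefficients -/
noncomputable def gam (q : ℂ) (s m : ℕ) : ℂ :=
  (-1)^m * (1 - q^(2*m+1)) * q ^ ((m.choose 2 : ℤ) - s * (m * (m+1)))

/-- the sequence `u_s` -/
noncomputable def uu (q : ℂ) (s N : ℕ) : ℂ :=
  ∑ m ∈ range (N+1), gam q s m / (Qn q (N-m) * Qn q (N+1+m))

theorem gam_succ {q : ℂ} (hq : q ≠ 0) (s m : ℕ) :
    gam q (s+1) m * q^(m^2+m) = gam q s m := by
  unfold gam
  rw [← zpow_natCast q (m^2+m), mul_assoc, ← zpow_add₀ hq]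
  congr 2
  push_cast
  ring

theorem uu_rec {q : ℂ} (hq : q ≠ 0) (hq1 : ‖q‖ < 1) (s N : ℕ) :
    uu q s N = ∑ i ∈ range (N+1), q^(i^2+i) * uu q (s+1) i / Qn q (N-i) := by
  have h := Finset.sum_range_diag_flip (N+1) (fun m j : ℕ =>
    q^((m+j)^2+(m+j)) * gam q (s+1) m / (Qn q j * Qn q (j+(2*m+1))) / Qn q (N-(m+j)))
  have h1 : ∑ i ∈ range (N+1), q^(i^2+i) * uu q (s+1) i / Qn q (N-i) =
     ∑ i ∈ range (N+1), ∑ m ∈ range (i+1),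
      q^((m+(i-m))^2+(m+(i-m))) * gam q (s+1) m / (Qn q (i-m) * Qn q ((i-m)+(2*m+1)))
        / Qn q (N-(m+(i-m))) := by
    apply Finset.sum_congr rfl
    intro i _
    unfold uu
    rw [Finset.mul_sum, Finset.sum_div]
    apply Finset.sum_congr rfl
    intro m hm
    have hm' : m ≤ i := by simp at hm; omega
    have e1 : m + (i-m) = i := by omega
    have e2 : (i-m)+(2*m+1) = i+1+m := by omega
    rw [e1, e2]; ring
  rw [h1, h]
  unfold uu
  apply Finset.sum_congr rfl
  intro m hm
  have hm' : m ≤ N := by simp at hm; omega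
  have e : N+1-m = (N-m)+1 := by omega
  rw [e]
  have hv := vand hq1 (N-m) (2*m+1)
  have e1 : N - m + (2*m+1) = N+1+m := by omega
  rw [e1] at hv
  rw [← gam_succ hq s m, div_eq_mul_one_div, ← hv, Finset.mul_sum]
  apply Finset.sum_congr rfl
  intro j _
  have e2 : N-(m+j) = N-m-j := by omega
  rw [e2]
  rw [show (m+j)^2+(m+j) = (m^2+m) + (j^2+(2*m+1)*j) by ring, pow_add]
  ring

theorem qPoch_eq_zero {q : ℂ} {a : ℂ} {n : ℕ} (j : ℕ) (hj : j < n) (h : a * q^j = 1) :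
    qPoch q a n = 0 := by
  unfold qPoch
  exact Finset.prod_eq_zero (Finset.mem_range.mpr hj) (by rw [h]; ring)

theorem choose2_cast (n : ℕ) : (n.choose 2 : ℤ) * 2 = n * (n - 1) := by
  induction n with
  | zero => simp
  | succ n ih =>
    rw [Nat.choose_succ_succ' n 1, Nat.choose_one_right]; push_cast; linarith

theorem neg_one_pow_parity {a b : ℕ} (h : a % 2 = b % 2) : (-1 : ℂ)^a = (-1)^b := by
  rw [neg_one_pow_eq_pow_mod_two (n := a), neg_one_pow_eq_pow_mod_two (n := b), h]

theorem uu_zero_pos {q : ℂ} (hq : q ≠ 0) (hq1 : ‖q‖ < 1) (N : ℕ) : uu q 0 (N+1) = 0 := by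
  -- L = 2N+3, z = q^{-(N+2)}
  have hb := qbinthm hq1 (2*N+3) ((q^(N+2))⁻¹)
  rw [qPoch_eq_zero (N+2) (by omega) (inv_mul_cancel₀ (pow_ne_zero _ hq)), zero_div] at hb
  rw [show 2*N+3+1 = (N+2)+(N+2) by ring, Finset.sum_range_add, ← Finset.sum_range_reflect,
    ← Finset.sum_add_distrib] at hb
  have key : ∀ m ∈ range (N+2), gam q 0 m / (Qn q (N+1-m) * Qn q (N+1+1+m)) =
      (-1)^N * q^(((N+2).choose 2 : ℤ) + 1 + (N+1)) *
      ((-1)^(N+2-1-m) * q^((N+2-1-m).choose 2) * ((q^(N+2))⁻¹)^(N+2-1-m) /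
        (Qn q (2*N+3-(N+2-1-m)) * Qn q (N+2-1-m)) +
       (-1)^(N+2+m) * q^((N+2+m).choose 2) * ((q^(N+2))⁻¹)^(N+2+m) /
        (Qn q (2*N+3-(N+2+m)) * Qn q (N+2+m))) := by
    intro m hm
    have hm' : m ≤ N+1 := by simp at hm; omega
    obtain ⟨d, hd⟩ := Nat.exists_eq_add_of_le hm'
    have e1 : N+2-1-m = d := by omega
    have e2 : 2*N+3-d = N+1+1+m := by omega
    have e3 : 2*N+3-(N+2+m) = d := by omega
    have e4 : N+1-m = d := by omega
    have e5 : N+2+m = N+1+1+m := by omega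
    rw [e1, e2, e3, e4, e5]
    have z1 : ∀ k : ℕ, q^(k.choose 2) * ((q^(N+2))⁻¹)^k =
        q^((k.choose 2 : ℤ) - (N+2)*k) := by
      intro k
      rw [← inv_pow, ← pow_mul, inv_pow, ← zpow_natCast, ← zpow_natCast, ← zpow_neg,
        ← zpow_add₀ hq]
      congr 1
    rw [mul_assoc ((-1)^d), z1, mul_assoc ((-1)^(N+1+1+m)), z1]
    have hQ1 := Qn_ne hq1 d; have hQ2 := Qn_ne hq1 (N+1+1+m)
    have s1 : (-1:ℂ)^N * (-1)^d = - (-1)^m := by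
      rw [← pow_add, neg_one_pow_parity (a := N+d) (b := m+1) (by omega), pow_succ]; ring
    have s2 : (-1:ℂ)^N * (-1)^(N+1+1+m) = (-1)^m := by
      rw [← pow_add, neg_one_pow_parity (a := N+(N+1+1+m)) (b := m) (by omega)]
    have c1 := choose2_cast (N+2); have c2 := choose2_cast d
    have c3 := choose2_cast (N+1+1+m); have c4 := choose2_cast m
    push_cast at c1 c2 c3 c4
    have hN : (N:ℤ) + 1 = m + d := by exact_mod_cast hd
    have hN' : (N:ℤ) = m + d - 1 := by linarith
    have x1 : q^(((N+2).choose 2 : ℤ) + 1 + (N+1)) * q^((d.choose 2 : ℤ) - (N+2)*d) =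
        q^((m.choose 2 : ℤ)) * q^(2*m+1) := by
      rw [← zpow_natCast q (2*m+1), ← zpow_add₀ hq, ← zpow_add₀ hq]
      congr 1
      have : ((((N+2).choose 2 : ℤ) + 1 + (N+1)) + ((d.choose 2 : ℤ) - (N+2)*d)) * 2 =
        ((m.choose 2 : ℤ) + (2*m+1 : ℕ)) * 2 := by
        push_cast
        rw [hN'] at c1 ⊢
        linear_combination c1 + c2 - c4
      linarith
    have x2 : q^(((N+2).choose 2 : ℤ) + 1 + (N+1)) *
        q^(((N+1+1+m).choose 2 : ℤ) - (N+2)*((N+1+1+m : ℕ) : ℤ)) =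
        q^((m.choose 2 : ℤ)) := by
      rw [← zpow_add₀ hq]
      congr 1
      have : ((((N+2).choose 2 : ℤ) + 1 + (N+1)) + 
        (((N+1+1+m).choose 2 : ℤ) - (N+2)*((N+1+1+m : ℕ) : ℤ))) * 2 =
        ((m.choose 2 : ℤ)) * 2 := by
        push_cast
        rw [hN'] at c1 c3 ⊢
        linear_combination c1 + c3 - c4
      linarith
    unfold gam
    simp only [Nat.cast_zero, zero_mul, sub_zero]
    rw [mul_comm (Qn q (N+1+1+m)) (Qn q d), ← add_div, ← mul_div_assoc]
    congr 1
    linear_combination (-(q^(((N+2).choose 2 : ℤ) + 1 + (N+1)) * q^((d.choose 2 : ℤ) - (N+2)*d))) * s1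
      - (q^(((N+2).choose 2 : ℤ) + 1 + (N+1)) *
        q^(((N+1+1+m).choose 2 : ℤ) - (N+2)*((N+1+1+m : ℕ) : ℤ))) * s2
      + (-1)^m * x1 - (-1)^m * x2
  unfold uu
  rw [Finset.sum_congr rfl key, ← Finset.mul_sum, hb, mul_zero]

theorem uu_zero {q : ℂ} (hq : q ≠ 0) (hq1 : ‖q‖ < 1) (N : ℕ) :
    uu q 0 N = if N = 0 then 1 else 0 := by
  rcases N with _ | N
  · have := one_sub_pow_ne hq1 0
    simp at this
    simp [uu, gam, Qn, div_self this]
  · simp [uu_zero_pos hq hq1 N]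

/-- Bailey coefficients -/
noncomputable def sig (q : ℂ) (s n : ℕ) : ℂ := ∑ m ∈ range n, gam q (s+1) m

/-- `w_s(N) = u_s(N-1)`. -/
theorem w_rep {q : ℂ} (hq : q ≠ 0) (hq1 : ‖q‖ < 1) (s N : ℕ) :
    (if N = 0 then 0 else uu q s (N-1)) =
    ∑ n ∈ range (N+1), (1 - q^(2*n)) * q^(n^2-n) * sig q s n / (Qn q (N-n) * Qn q (N+n)) := by
  have key : ∀ J, J ≤ N →
      ∑ n ∈ range (J+1), (1 - q^(2*n)) * q^(n^2-n) * sig q s n / (Qn q (N-n) * Qn q (N+n)) =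
      ∑ m ∈ range J, gam q (s+1) m * q^(m^2+m) * (1 - q^(N-m)) / (Qn q (N-m) * Qn q (N+m)) -
      sig q s J * q^(J^2+J) * (1 - q^(N-J)) / (Qn q (N-J) * Qn q (N+J)) := by
    intro J
    induction J with
    | zero => intro _; simp [sig]
    | succ J ih =>
      intro hJ
      rw [Finset.sum_range_succ, ih (by omega), Finset.sum_range_succ]
      obtain ⟨d, rfl⟩ := Nat.exists_eq_add_of_le hJ
      have e1 : J+1+d-J = d+1 := by omega
      have e2 : J+1+d-(J+1) = d := by omega
      have e3 : J+1+d+(J+1) = (J+1+d+J)+1 := by omega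
      have e4 : (J+1)^2-(J+1) = J^2+J := by
        have : (J+1)^2 = J^2+J+(J+1) := by ring
        omega
      have hs : sig q s (J+1) = sig q s J + gam q (s+1) J := by
        simp [sig, Finset.sum_range_succ]
      rw [e1, e2, e3, e4, Qn_succ, Qn_succ, hs]
      have h1 := Qn_ne hq1 d; have h2 := Qn_ne hq1 (J+1+d+J)
      have h3 := one_sub_pow_ne hq1 d; have h4 := one_sub_pow_ne hq1 (J+1+d+J)
      field_simp
      ring
  rw [key N le_rfl]
  simp only [Nat.sub_self, pow_zero, sub_self, mul_zero, zero_div, sub_zero]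
  rcases N with _ | N
  · simp
  · simp only [Nat.succ_ne_zero, if_false, Nat.add_sub_cancel]
    unfold uu
    apply Finset.sum_congr rfl
    intro m hm
    have hm' : m ≤ N := by simp at hm; omega
    rw [gam_succ hq]
    have e1 : N+1-m = (N-m)+1 := by omega
    rw [e1, Qn_succ]
    have h1 := Qn_ne hq1 (N-m); have h2 := Qn_ne hq1 (N+1+m)
    have h3 := one_sub_pow_ne hq1 (N-m)
    field_simp

/-- the shift `m(K)` -/
def mm (t : ℕ) (K : Fin (t+1) → ℕ) : ℕ := ∑ j : Fin t, (2 * K j.castSucc - 1)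

theorem mm_snoc (t : ℕ) (K : Fin (t+1) → ℕ) (k : ℕ) :
    mm (t+1) (Fin.snoc (α := fun _ => ℕ) K k) = mm t K + (2 * K (Fin.last t) - 1) := by
  unfold mm
  rw [Fin.sum_univ_castSucc]
  simp only [Fin.snoc_castSucc]

theorem mm_cast (t : ℕ) (K : Fin (t+1) → ℕ) (hK : ∀ i, 1 ≤ K i) :
    (mm t K : ℤ) = 2 * ∑ j : Fin t, (K j.castSucc : ℤ) - t := by
  unfold mm
  push_cast
  rw [Finset.mul_sum]
  have : ∀ j : Fin t, ((2 * K j.castSucc - 1 : ℕ) : ℤ) = 2 * (K j.castSucc : ℤ) - 1 := by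
    intro j; have := hK j.castSucc; omega
  rw [Finset.sum_congr rfl (fun j _ => this j), Finset.sum_sub_distrib]
  simp

theorem UtProd_snoc (q : ℂ) (t : ℕ) (K : Fin (t+1) → ℕ) (k : ℕ) (hK : ∀ i, 1 ≤ K i) :
    UtProd q (t+1) (Fin.snoc (α := fun _ => ℕ) K k) =
    UtProd q t K * (q ^ (K (Fin.last t) ^ 2) *
      qBinom q ((k : ℤ) + K (Fin.last t) - 1 + mm t K) ((k:ℤ) - K (Fin.last t))) := by
  unfold UtProd
  rw [Fin.prod_univ_castSucc]
  congr 1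
  · apply Finset.prod_congr rfl
    intro i _
    rw [← Fin.castSucc_succ, Fin.snoc_castSucc, Fin.snoc_castSucc]
    congr 3
    congr 1
    rw [Finset.sum_filter, Finset.sum_filter, Fin.sum_univ_castSucc]
    simp only [Fin.snoc_castSucc, Fin.val_castSucc, Fin.val_last]
    have : ¬ (t + 1 < (i:ℕ)) := by have := i.2; omega
    simp [this]
  · rw [Fin.succ_last, Fin.snoc_last, Fin.snoc_castSucc, mm_cast t K hK]
    congr 2
    rw [Finset.sum_filter, Fin.sum_univ_castSucc, Fin.sum_univ_castSucc]
    simp only [Fin.snoc_castSucc, Fin.val_castSucc, Fin.val_last]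
    simp
    ring

theorem qBinom_eq (q : ℂ) (a m : ℕ) :
    qBinom q ((a:ℤ) + m) a = qPoch q (q^(m+1)) a / Qn q a := by
  unfold qBinom qPoch Qn
  rw [if_pos (by omega), Int.toNat_natCast, Finset.prod_div_distrib]
  congr 1
  · apply Finset.prod_congr rfl
    intro j _
    rw [← pow_add, ← zpow_natCast]
    congr 2
    push_cast; ring

/-- truncated multi-sum -/
noncomputable def Psi (q : ℂ) (t M : ℕ) (Θ : ℕ → ℕ → ℂ) : ℂ :=
  ∑ K ∈ Fintype.piFinset (fun _ : Fin (t+1) => Icc 1 M),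
    UtProd q t K * Θ (K (Fin.last t)) (mm t K)

theorem sum_pi_snoc (t M : ℕ) (f : (Fin (t+2) → ℕ) → ℂ) :
    ∑ K ∈ Fintype.piFinset (fun _ : Fin (t+2) => Icc 1 M), f K =
    ∑ K ∈ Fintype.piFinset (fun _ : Fin (t+1) => Icc 1 M), ∑ k ∈ Icc 1 M,
      f (Fin.snoc (α := fun _ => ℕ) K k) := by
  rw [← Finset.sum_product']
  symm
  apply Finset.sum_nbij' (fun p => Fin.snoc (α := fun _ => ℕ) p.1 p.2)
    (fun K => (Fin.init K, K (Fin.last _)))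
  · intro p hp
    simp only [Finset.mem_product, Fintype.mem_piFinset] at hp ⊢
    intro i
    refine Fin.lastCases ?_ ?_ i
    · simpa using hp.2
    · intro j; simpa using hp.1 j
  · intro K hK
    simp only [Finset.mem_product, Fintype.mem_piFinset] at hK ⊢
    exact ⟨fun i => hK _, hK _⟩
  · intro p _; simp
  · intro K _; simp
  · intro p _; rfl

theorem Psi_succ (q : ℂ) (t M : ℕ) (Θ : ℕ → ℕ → ℂ) :
    Psi q (t+1) M Θ = Psi q t M (fun κ m => ∑ k ∈ Icc 1 M, q^(κ^2) *
      qBinom q ((k : ℤ) + κ - 1 + m) ((k:ℤ) - κ) * Θ k (m + (2*κ-1))) := by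
  unfold Psi
  rw [sum_pi_snoc]
  apply Finset.sum_congr rfl
  intro K hK
  simp only [Fintype.mem_piFinset, Finset.mem_Icc] at hK
  rw [Finset.mul_sum]
  apply Finset.sum_congr rfl
  intro k _
  rw [UtProd_snoc q t K k (fun i => (hK i).1), mm_snoc, Fin.snoc_last]
  ring

/-- basic summation -/
theorem bail {q : ℂ} (hq1 : ‖q‖ < 1) (A : ℂ) (φ ψ : ℕ → ℂ)
    (h : ∀ n, φ n = ∑ i ∈ range (n+1), q^(i^2+i) * ψ i / Qn q (n-i)) (n : ℕ) :
    ∑ a ∈ range (n+1), qPoch q A a / Qn q a * (A^(n-a) * φ (n-a)) =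
    ∑ i ∈ range (n+1), q^(i^2+i) * A^i * ψ i / Qn q (n-i) := by
  rw [← Finset.sum_range_reflect]
  have hf := Finset.sum_range_diag_flip (n+1) (fun i l : ℕ =>
    qPoch q A (n-(i+l)) / Qn q (n-(i+l)) * (A^(i+l) * (q^(i^2+i) * ψ i / Qn q l)))
  have h1 : ∀ j ∈ range (n+1), qPoch q A (n+1-1-j) / Qn q (n+1-1-j) *
      (A^(n-(n+1-1-j)) * φ (n-(n+1-1-j))) = ∑ i ∈ range (j+1),
      qPoch q A (n-(i+(j-i))) / Qn q (n-(i+(j-i))) *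
        (A^(i+(j-i)) * (q^(i^2+i) * ψ i / Qn q (j-i))) := by
    intro j hj
    have hj' : j ≤ n := by simp at hj; omega
    have e1 : n-(n+1-1-j) = j := by omega
    have e2 : n+1-1-j = n-j := by omega
    rw [e1, e2, h j, Finset.mul_sum, Finset.mul_sum]
    apply Finset.sum_congr rfl
    intro i hi
    have e3 : i+(j-i) = j := by simp at hi; omega
    rw [e3]
  rw [Finset.sum_congr rfl h1, hf]
  apply Finset.sum_congr rfl
  intro i hi
  have hi' : i ≤ n := by simp at hi; omega
  have e : n+1-i = (n-i)+1 := by omega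
  rw [e, div_eq_mul_one_div (q^(i^2+i) * A^i * ψ i), ← vandA hq1 (n-i) A, Finset.mul_sum]
  apply Finset.sum_congr rfl
  intro l _
  have e2 : n-(i+l) = n-i-l := by omega
  rw [e2, pow_add]
  have := Qn_ne hq1 (n-i-l); have := Qn_ne hq1 l
  field_simp

/-- truncated operator -/
noncomputable def Fop (q : ℂ) (t M : ℕ) (φ : ℕ → ℂ) (N : ℕ) : ℂ :=
  Psi q t M (fun k m => if k ≤ N then q^((N-k)*(m+1)) * φ (N-k) else 0)

theorem Fop_succ {q : ℂ} (hq1 : ‖q‖ < 1) (t M : ℕ) (φ ψ : ℕ → ℂ)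
    (h : ∀ n, φ n = ∑ i ∈ range (n+1), q^(i^2+i) * ψ i / Qn q (n-i)) (N : ℕ) (hN : N ≤ M) :
    Fop q (t+1) M φ N = ∑ k ∈ range (N+1), q^(k^2) / Qn q (N-k) * Fop q t M ψ k := by
  unfold Fop
  rw [Psi_succ]
  unfold Psi
  rw [Finset.sum_congr rfl (fun k _ => Finset.mul_sum _ _ (q^(k^2) / Qn q (N-k)))]
  rw [Finset.sum_comm]
  apply Finset.sum_congr rfl
  intro K hK
  simp only [Fintype.mem_piFinset, Finset.mem_Icc] at hK
  have hκ := (hK (Fin.last t)).1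
  generalize K (Fin.last t) = κ at *
  generalize mm t K = m
  suffices hh : ∑ k ∈ Icc 1 M, q^(κ^2) * qBinom q ((k : ℤ) + κ - 1 + m) ((k:ℤ) - κ) *
      (if k ≤ N then q^((N-k)*(m + (2*κ-1)+1)) * φ (N-k) else 0) =
      ∑ k ∈ range (N+1), q^(k^2) / Qn q (N-k) *
        (if κ ≤ k then q^((k-κ)*(m+1)) * ψ (k-κ) else 0) by
    beta_reduce
    rw [hh, Finset.mul_sum]
    apply Finset.sum_congr rfl
    intro k _
    ring
  have hz : ∀ k : ℕ, k < κ → qBinom q ((k : ℤ) + κ - 1 + m) ((k:ℤ) - κ) = 0 := by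
    intro k hk
    unfold qBinom
    rw [if_neg (by omega)]
  by_cases hκN : κ ≤ N
  · obtain ⟨n, rfl⟩ := Nat.exists_eq_add_of_le hκN
    have L : ∀ f : ℕ → ℂ, (∀ k, k < κ → f k = 0) → (∀ k, κ + n < k → f k = 0) →
        ∑ k ∈ Icc 1 M, f k = ∑ i ∈ range (n+1), f (κ+i) := by
      intro f h1 h2
      have : ∑ k ∈ Ico κ (κ+n+1), f k = ∑ k ∈ Icc 1 M, f k := by
        apply Finset.sum_subset
        · intro k hk; simp at hk ⊢; omega
        · intro k hk hk'
          simp at hk hk'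
          by_cases hkκ : k < κ
          · exact h1 k hkκ
          · exact h2 k (by omega)
      rw [← this, Finset.sum_Ico_eq_sum_range]
      congr 2; omega
    have L' : ∀ f : ℕ → ℂ, (∀ k, k < κ → f k = 0) →
        ∑ k ∈ range (κ+n+1), f k = ∑ i ∈ range (n+1), f (κ+i) := by
      intro f h1
      rw [add_assoc, Finset.sum_range_add, Finset.sum_eq_zero, zero_add]
      intro k hk; exact h1 k (by simpa using hk)
    rw [L, L']
    · have hb := bail hq1 (q^(m+2*κ)) φ ψ h n
      have l1 : ∀ i ∈ range (n+1), q^(κ^2) * qBinom q (((κ+i : ℕ) : ℤ) + κ - 1 + m)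
          (((κ+i : ℕ):ℤ) - κ) * (if κ+i ≤ κ+n then
            q^((κ+n-(κ+i))*(m + (2*κ-1)+1)) * φ (κ+n-(κ+i)) else 0) =
          q^(κ^2) * (qPoch q (q^(m+2*κ)) i / Qn q i * ((q^(m+2*κ))^(n-i) * φ (n-i))) := by
        intro i hi
        have hi' : i ≤ n := by simp at hi; omega
        have e1 : (((κ+i : ℕ) : ℤ) + κ - 1 + m) = (i:ℤ) + ((m + 2*κ - 1 : ℕ) : ℤ) := by omega
        have e2 : (((κ+i : ℕ):ℤ) - κ) = (i:ℤ) := by push_cast; ring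
        have e3 : m + 2*κ - 1 + 1 = m + 2*κ := by omega
        have e4 : κ+n-(κ+i) = n - i := by omega
        have e5 : m + (2*κ-1)+1 = m + 2*κ := by omega
        rw [e1, e2, qBinom_eq, e3, if_pos (by omega), e4, e5, mul_comm (n-i), pow_mul]
        ring
      rw [Finset.sum_congr rfl l1, ← Finset.mul_sum, hb, Finset.mul_sum]
      apply Finset.sum_congr rfl
      intro i hi
      have e4 : κ+n-(κ+i) = n - i := by omega
      have e6 : κ+i-κ = i := by omega
      rw [if_pos (by omega), e4, e6, ← pow_mul]
      rw [show (κ+i)^2 = κ^2 + 2*κ*i + i^2 by ring]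
      ring
    · intro k hk
      rw [if_neg (by omega), mul_zero]
    · intro k hk
      rw [hz k hk]; ring
    · intro k hk
      rw [if_neg (by omega), mul_zero]
  · rw [Finset.sum_eq_zero, Finset.sum_eq_zero]
    · intro k hk
      simp at hk
      rw [if_neg (by omega), mul_zero]
    · intro k hk
      by_cases hkN : k ≤ N
      · rw [hz k (by omega)]; ring
      · rw [if_neg hkN, mul_zero]

theorem UtProd_zero (q : ℂ) (K : Fin 1 → ℕ) : UtProd q 0 K = 1 := by simp [UtProd]

theorem Fop_zero {q : ℂ} (hq : q ≠ 0) (hq1 : ‖q‖ < 1) (M : ℕ) (φ ψ : ℕ → ℂ)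
    (h : ∀ n, φ n = ∑ i ∈ range (n+1), q^(i^2+i) * ψ i / Qn q (n-i)) (N : ℕ) (hN : N ≤ M) :
    Fop q 0 M φ N = ∑ k ∈ range (N+1), q^(k^2) / Qn q (N-k) *
      (q⁻¹ * (if k = 0 then 0 else ψ (k-1))) := by
  have h0 : Fop q 0 M φ N = ∑ k ∈ Icc 1 M, if k ≤ N then q^(N-k) * φ (N-k) else 0 := by
    unfold Fop Psi
    apply Finset.sum_nbij' (fun K => K 0) (fun k _ => k)
    · intro K hK; exact (Fintype.mem_piFinset.mp hK) 0
    · intro k hk; exact Fintype.mem_piFinset.mpr (fun _ => hk)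
    · intro K _; funext i; rw [(Subsingleton.elim (α := Fin 1) i 0)]
    · intro k _; rfl
    · intro K _
      rw [UtProd_zero]
      simp [mm]
  rw [h0]
  rcases N with _ | n
  · rw [Finset.sum_eq_zero]
    · simp
    · intro k hk; simp at hk; rw [if_neg (by omega)]
  · have : ∑ k ∈ Ico 1 (n+2), (if k ≤ n+1 then q^(n+1-k) * φ (n+1-k) else 0) =
        ∑ k ∈ Icc 1 M, if k ≤ n+1 then q^(n+1-k) * φ (n+1-k) else 0 := by
      apply Finset.sum_subset
      · intro k hk; simp at hk ⊢; omega
      · intro k hk hk'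
        simp at hk hk'
        rw [if_neg (by omega)]
    rw [← this, Finset.sum_Ico_eq_sum_range, Finset.sum_range_succ']
    simp only [show n+2-1 = n+1 by omega, if_true, mul_zero, add_zero]
    have hb := bail hq1 q φ ψ h n
    have l1 : ∀ a ∈ range (n+1), (if 1+a ≤ n+1 then q^(n+1-(1+a)) * φ (n+1-(1+a)) else 0) =
        qPoch q q a / Qn q a * (q^(n-a) * φ (n-a)) := by
      intro a ha
      simp at ha
      rw [if_pos (by omega), show n+1-(1+a) = n-a by omega, qPoch_self,
        div_self (Qn_ne hq1 a), one_mul]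
    rw [Finset.sum_congr rfl l1, hb]
    apply Finset.sum_congr rfl
    intro i _
    rw [if_neg (by omega), show n+1-(i+1) = n-i by omega, show i+1-1 = i by omega]
    rw [show (i+1)^2 = (i^2+i)+i+1 by ring, pow_succ q, pow_add q (i^2+i) i]
    rw [div_mul_eq_mul_div]
    congr 1
    field_simp

theorem bailey {q : ℂ} (hq1 : ‖q‖ < 1) (C : ℕ → ℂ) (N : ℕ) :
    ∑ k ∈ range (N+1), q^(k^2) / Qn q (N-k) *
      ∑ n ∈ range (k+1), C n / (Qn q (k-n) * Qn q (k+n)) =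
    ∑ n ∈ range (N+1), q^(n^2) * C n / (Qn q (N-n) * Qn q (N+n)) := by
  have hf := Finset.sum_range_diag_flip (N+1) (fun n j : ℕ =>
    q^((n+j)^2) / Qn q (N-(n+j)) * (C n / (Qn q j * Qn q (j + 2*n))))
  have h1 : ∀ k ∈ range (N+1), q^(k^2) / Qn q (N-k) *
      ∑ n ∈ range (k+1), C n / (Qn q (k-n) * Qn q (k+n)) = ∑ n ∈ range (k+1),
      q^((n+(k-n))^2) / Qn q (N-(n+(k-n))) * (C n / (Qn q (k-n) * Qn q ((k-n) + 2*n))) := by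
    intro k _
    rw [Finset.mul_sum]
    apply Finset.sum_congr rfl
    intro n hn
    simp at hn
    rw [show n+(k-n) = k by omega, show (k-n)+2*n = k+n by omega]
  rw [Finset.sum_congr rfl h1, hf]
  apply Finset.sum_congr rfl
  intro n hn
  have hn' : n ≤ N := by simp at hn; omega
  have hv := vand hq1 (N-n) (2*n)
  rw [show N-n+2*n = N+n by omega] at hv
  rw [show N+1-n = (N-n)+1 by omega, div_eq_mul_one_div, ← hv, Finset.mul_sum]
  apply Finset.sum_congr rfl
  intro j _
  rw [show N-(n+j) = N-n-j by omega, show (n+j)^2 = n^2+(j^2+2*n*j) by ring, pow_add]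
  have := Qn_ne hq1 (N-n-j); have := Qn_ne hq1 j; have := Qn_ne hq1 (j+2*n)
  field_simp

theorem Fop_uu {q : ℂ} (hq : q ≠ 0) (hq1 : ‖q‖ < 1) (t M : ℕ) : ∀ (s N : ℕ), N ≤ M →
    Fop q t M (uu q s) N = ∑ n ∈ range (N+1), q^((t+1)*n^2) *
      (q⁻¹ * ((1 - q^(2*n)) * q^(n^2-n) * sig q (s+t+1) n)) / (Qn q (N-n) * Qn q (N+n)) := by
  induction t with
  | zero =>
    intro s N hN
    rw [Fop_zero hq hq1 M (uu q s) (uu q (s+1)) (uu_rec hq hq1 s) N hN]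
    simp only [w_rep hq hq1 (s+1)]
    have hb := bailey hq1 (fun n => q⁻¹ * ((1 - q^(2*n)) * q^(n^2-n) * sig q (s+1) n)) N
    simp only [zero_add, one_mul, add_zero]
    rw [← hb]
    apply Finset.sum_congr rfl
    intro k _
    congr 1
    rw [Finset.mul_sum]
    apply Finset.sum_congr rfl
    intro n _
    ring
  | succ t ih =>
    intro s N hN
    rw [Fop_succ hq1 t M (uu q s) (uu q (s+1)) (uu_rec hq hq1 s) N hN]
    have hb := bailey hq1 (fun n => q^((t+1)*n^2) *
      (q⁻¹ * ((1 - q^(2*n)) * q^(n^2-n) * sig q (s+1+t+1) n))) N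
    have : ∀ k ∈ range (N+1), q^(k^2) / Qn q (N-k) * Fop q t M (uu q (s+1)) k =
      q^(k^2) / Qn q (N-k) * ∑ n ∈ range (k+1), q^((t+1)*n^2) *
      (q⁻¹ * ((1 - q^(2*n)) * q^(n^2-n) * sig q (s+1+t+1) n)) / (Qn q (k-n) * Qn q (k+n)) := by
      intro k hk
      simp at hk
      rw [ih (s+1) k (by omega)]
    rw [Finset.sum_congr rfl this, hb]
    apply Finset.sum_congr rfl
    intro n _
    rw [show s+1+t+1 = s+(t+1)+1 by ring, show (t+1+1)*n^2 = n^2+(t+1)*n^2 by ring, pow_add]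
    ring

/-- The Bailey coefficients -/
noncomputable def AA (q : ℂ) (t n : ℕ) : ℂ :=
  q^((t+1)*n^2) * (q⁻¹ * ((1 - q^(2*n)) * q^(n^2-n) * sig q (t+1) n))

theorem BB_eq {q : ℂ} (hq : q ≠ 0) (hq1 : ‖q‖ < 1) (t N : ℕ) :
    ∑ K ∈ (Fintype.piFinset (fun _ : Fin (t+1) => Icc 1 N)).filter (fun K => K (Fin.last t) = N),
      UtProd q t K = ∑ n ∈ range (N+1), AA q t n / (Qn q (N-n) * Qn q (N+n)) := by
  have := Fop_uu hq hq1 t N 0 N le_rfl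
  rw [zero_add] at this
  unfold AA
  rw [← this, Finset.sum_filter]
  unfold Fop Psi
  apply Finset.sum_congr rfl
  intro K hK
  simp only [Fintype.mem_piFinset, Finset.mem_Icc] at hK
  show _ = UtProd q t K * (if K (Fin.last t) ≤ N then
    q^((N-K (Fin.last t))*(mm t K+1)) * uu q 0 (N-K (Fin.last t)) else 0)
  rw [if_pos (hK _).2, uu_zero hq hq1]
  by_cases h : K (Fin.last t) = N
  · simp [h]
  · rw [if_neg h, if_neg]
    · ring
    · have := (hK (Fin.last t)).2; omega

/-- the x-dependent weight -/
noncomputable def WW (q x : ℂ) (N : ℕ) : ℂ :=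
  qPoch q (x * q) (N - 1) * qPoch q (q / x) (N - 1) * q ^ N

theorem finite_id {q x : ℂ} (hq1 : ‖q‖ < 1) (hx : x ≠ 0)
    (h1 : ∀ n : ℕ, 1 ≤ n → 1 - x * q^n ≠ 0) (h2 : ∀ n : ℕ, 1 ≤ n → 1 - q^n / x ≠ 0)
    (A : ℕ → ℂ) (hA : A 0 = 0) (J : ℕ) :
    ∑ N ∈ range (J+1), WW q x N * ∑ n ∈ range (N+1), A n / (Qn q (N-n) * Qn q (N+n)) =
    ∑ n ∈ range (J+1), A n * q^n / ((1 - x * q^n) * (1 - q^n / x)) *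
      (qPoch q (x * q) J * qPoch q (q / x) J / (Qn q (J-n) * Qn q (J+n))) := by
  induction J with
  | zero => simp [hA]
  | succ J ih =>
    rw [Finset.sum_range_succ, ih, Finset.sum_range_succ _ (J+1), mul_add, ← add_assoc,
      Finset.sum_range_succ _ (J+1), Finset.mul_sum, ← Finset.sum_add_distrib]
    congr 1
    · apply Finset.sum_congr rfl
      intro n hn
      have hn' : n ≤ J := by simp at hn; omega
      rcases Nat.eq_zero_or_pos n with h0 | hpos
      · subst h0; simp [hA]
      obtain ⟨d, rfl⟩ := Nat.exists_eq_add_of_le hn'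
      have g1 := h1 n hpos
      have g2 := h2 n hpos
      unfold WW
      rw [show n+d+1-1 = n+d by omega, show n+d+1-n = d+1 by omega, show n+d-n = d by omega,
        show n+d+1+n = (n+d+n)+1 by omega, Qn_succ, Qn_succ, qPoch_succ, qPoch_succ]
      have k1 := Qn_ne hq1 d; have k2 := Qn_ne hq1 (n+d+n)
      have k3 := one_sub_pow_ne hq1 d; have k4 := one_sub_pow_ne hq1 (n+d+n)
      have e1 : q^(d+1) = q^d * q := by ring
      have e2 : q^(n+d+n+1) = q^n * q^n * q^d * q := by ring
      have e3 : q^(n+d) = q^n * q^d := by ring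
      have e4 : q^(n+d+1) = q^n * q^d * q := by ring
      rw [e1] at k3; rw [e2] at k4
      rw [e1, e2, e3, e4]
      generalize q^n = a at *
      generalize q^d = b at *
      generalize Qn q d = Q1 at *
      generalize Qn q (n+d+n) = Q2 at *
      generalize qPoch q (x*q) (n+d) = P1
      generalize qPoch q (q/x) (n+d) = P2
      generalize A n = c
      have g2' : x - a ≠ 0 := by
        intro h; apply g2; rw [show x = a by linear_combination h]
        rw [show x = a by linear_combination h] at hx
        rw [div_self hx]; ring
      have g3 : 1 - a / x = (x - a)/x := by field_simp
      have k4' : 1 - a^2 * b * q ≠ 0 := by rw [pow_two]; exact k4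
      have g1' : 1 - a * x ≠ 0 := by rw [mul_comm]; exact g1
      rw [g3, mul_comm x a]
      field_simp
      ring
    · have g1 := h1 (J+1) (by omega)
      have g2 := h2 (J+1) (by omega)
      unfold WW
      rw [show J+1-1 = J by omega, qPoch_succ, qPoch_succ]
      rw [show x*q*q^J = x*q^(J+1) by ring, show q/x*q^J = q^(J+1)/x by ring]
      have k1 := Qn_ne hq1 (J+1-(J+1)); have k2 := Qn_ne hq1 (J+1+(J+1))
      generalize 1 - x*q^(J+1) = u at *
      generalize 1 - q^(J+1)/x = v at *
      field_simp

theorem summable_geo {q : ℂ} (hq1 : ‖q‖ < 1) (a : ℂ) : Summable (fun j : ℕ => ‖-(a * q^j)‖) := by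
  simp only [norm_neg, norm_mul, norm_pow]
  exact (summable_geometric_of_lt_one (norm_nonneg _) hq1).mul_left _

theorem qPoch_tendsto {q : ℂ} (hq1 : ‖q‖ < 1) (a : ℂ) :
    Filter.Tendsto (qPoch q a) Filter.atTop (nhds (qPochInf q a)) := by
  have hm := multipliable_one_add_of_summable (summable_geo hq1 a)
  have := hm.hasProd.tendsto_prod_nat
  simp only [← sub_eq_add_neg] at this
  exact this

theorem qPochInf_self_ne {q : ℂ} (hq1 : ‖q‖ < 1) : qPochInf q q ≠ 0 := by
  have := tprod_one_add_ne_zero_of_summable (f := fun j : ℕ => -(q * q^j)) (by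
    intro j
    have := one_sub_pow_ne hq1 j
    rw [pow_succ'] at this
    rwa [← sub_eq_add_neg]) (summable_geo hq1 q)
  simp only [← sub_eq_add_neg] at this
  exact this

theorem Qn_tendsto {q : ℂ} (hq1 : ‖q‖ < 1) :
    Filter.Tendsto (Qn q) Filter.atTop (nhds (qPochInf q q)) := by
  have := qPoch_tendsto hq1 q
  rwa [show qPoch q q = Qn q from funext (qPoch_self q)] at this

theorem bdd_of_tendsto {u : ℕ → ℂ} {l : ℂ} (h : Filter.Tendsto u Filter.atTop (nhds l)) :
    ∃ C : ℝ, 0 < C ∧ ∀ n, ‖u n‖ ≤ C := by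
  obtain ⟨C, hC⟩ := h.norm.bddAbove_range
  refine ⟨max C 1, by positivity, fun n => le_trans (hC ⟨n, rfl⟩) (le_max_left _ _)⟩

theorem qPoch_bdd {q : ℂ} (hq1 : ‖q‖ < 1) (a : ℂ) : ∃ C : ℝ, 0 < C ∧ ∀ n, ‖qPoch q a n‖ ≤ C :=
  bdd_of_tendsto (qPoch_tendsto hq1 a)

theorem Qn_inv_bdd {q : ℂ} (hq1 : ‖q‖ < 1) : ∃ C : ℝ, 0 < C ∧ ∀ n, ‖(Qn q n)⁻¹‖ ≤ C :=
  bdd_of_tendsto ((Qn_tendsto hq1).inv₀ (qPochInf_self_ne hq1))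

theorem qBinom_bdd {q : ℂ} (hq1 : ‖q‖ < 1) : ∃ C : ℝ, 0 < C ∧ ∀ n k, ‖qBinom q n k‖ ≤ C := by
  obtain ⟨C, hC0, hC⟩ := bdd_of_tendsto (Qn_tendsto hq1)
  obtain ⟨D, hD0, hD⟩ := Qn_inv_bdd hq1
  refine ⟨C * D * D, by positivity, ?_⟩
  intro n k
  by_cases h : 0 ≤ k ∧ k ≤ n
  · obtain ⟨a, rfl⟩ := Int.eq_ofNat_of_zero_le h.1
    obtain ⟨m, hm⟩ := Int.eq_ofNat_of_zero_le (sub_nonneg.mpr h.2)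
    have : n = (a:ℤ) + m := by linarith
    rw [this, qBinom_eq]
    have e : qPoch q (q^(m+1)) a / Qn q a = Qn q (m+a) * (Qn q m)⁻¹ * (Qn q a)⁻¹ := by
      have : Qn q (m+a) = Qn q m * qPoch q (q^(m+1)) a := by
        unfold Qn qPoch
        rw [Finset.prod_range_add]
        congr 1
        apply Finset.prod_congr rfl
        intro j _
        ring
      rw [this]
      have := Qn_ne hq1 m
      field_simp
    rw [e, norm_mul, norm_mul]
    gcongr
    · exact hC _
    · exact hD _
    · exact hD _
  · unfold qBinom
    rw [if_neg h, norm_zero]; positivity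

theorem summable_pi {r : ℝ} (h0 : 0 ≤ r) (h1 : r < 1) (n : ℕ) :
    Summable (fun K : Fin n → ℕ => ∏ i, r^(K i)) := by
  induction n with
  | zero => exact Summable.of_finite
  | succ n ih =>
    rw [← (Fin.consEquiv (fun _ : Fin (n+1) => ℕ)).summable_iff]
    have := (summable_geometric_of_lt_one h0 h1).mul_of_nonneg ih
      (fun _ => by positivity) (fun K => Finset.prod_nonneg (fun _ _ => by positivity))
    convert this using 1
    funext p
    simp [Fin.consEquiv, Fin.prod_univ_succ]

theorem UtTerm_bdd {q : ℂ} (hq1 : ‖q‖ < 1) (x : ℂ) (t : ℕ) :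
    ∃ C : ℝ, 0 < C ∧ ∀ K, ‖UtTerm q x t K‖ ≤ C * ∏ i, ‖q‖^(K i) := by
  obtain ⟨C1, h10, h1⟩ := qPoch_bdd hq1 (x*q)
  obtain ⟨C2, h20, h2⟩ := qPoch_bdd hq1 (q/x)
  obtain ⟨C3, h30, h3⟩ := qBinom_bdd hq1
  refine ⟨C1 * C2 * C3^t, by positivity, ?_⟩
  intro K
  have hP : ‖UtProd q t K‖ ≤ C3^t * ∏ i : Fin t, ‖q‖^(K i.castSucc) := by
    unfold UtProd
    rw [norm_prod]
    calc _ ≤ ∏ i : Fin t, (C3 * ‖q‖^(K i.castSucc)) := by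
          apply Finset.prod_le_prod
          · intro i _; positivity
          · intro i _
            rw [norm_mul, norm_pow, mul_comm]
            apply mul_le_mul (h3 _ _) _ (by positivity) h30.le
            exact pow_le_pow_of_le_one (norm_nonneg _) hq1.le (Nat.le_self_pow (by norm_num) _)
      _ = _ := by rw [Finset.prod_mul_distrib]; simp
  unfold UtTerm
  rw [norm_mul, norm_mul, norm_mul, norm_pow, Fin.prod_univ_castSucc]
  calc _ ≤ C1 * C2 * ‖q‖^(K (Fin.last t)) * (C3^t * ∏ i : Fin t, ‖q‖^(K i.castSucc)) := by
        gcongr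
        · exact h1 _
        · exact h2 _
    _ = _ := by ring

theorem Ut_summable {q : ℂ} (hq1 : ‖q‖ < 1) (x : ℂ) (t : ℕ) :
    Summable (fun K => ‖UtTerm q x t K‖) := by
  obtain ⟨C, _, hC⟩ := UtTerm_bdd hq1 x t
  exact Summable.of_nonneg_of_le (fun _ => norm_nonneg _) hC
    ((summable_pi (norm_nonneg q) hq1 (t+1)).mul_left C)

theorem UtProd_eq_zero (q : ℂ) (t : ℕ) (K : Fin (t+1) → ℕ)
    (h : ¬ ∀ i : Fin t, K i.castSucc ≤ K i.succ) : UtProd q t K = 0 := by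
  push Not at h
  obtain ⟨i, hi⟩ := h
  unfold UtProd
  apply Finset.prod_eq_zero (Finset.mem_univ i)
  unfold qBinom
  rw [if_neg (by omega), mul_zero]

theorem Ut_hasSum {q : ℂ} (hq : q ≠ 0) (hq1 : ‖q‖ < 1) (x : ℂ) (t : ℕ) :
    HasSum (fun N => WW q x N * ∑ n ∈ range (N+1), AA q t n / (Qn q (N-n) * Qn q (N+n)))
      (∑' k : {k : Fin (t+1) → ℕ // (∀ i : Fin t, k i.castSucc ≤ k i.succ) ∧ 1 ≤ k 0},
        UtTerm q x t k.1) := by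
  set S : Set (Fin (t+1) → ℕ) := {k | (∀ i : Fin t, k i.castSucc ≤ k i.succ) ∧ 1 ≤ k 0} with hS
  have e1 : ∑' k : {k : Fin (t+1) → ℕ // (∀ i : Fin t, k i.castSucc ≤ k i.succ) ∧ 1 ≤ k 0},
        UtTerm q x t k.1 = ∑' k, S.indicator (UtTerm q x t) k := tsum_subtype S (UtTerm q x t)
  rw [e1]
  have hs : Summable (S.indicator (UtTerm q x t)) :=
    ((Ut_summable hq1 x t).of_norm).indicator S
  have hf := hs.hasSum.tsum_fiberwise (fun K => K (Fin.last t))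
  suffices hfun : (fun N => WW q x N * ∑ n ∈ range (N+1), AA q t n / (Qn q (N-n) * Qn q (N+n)))
      = (fun c => ∑' b : ↑((fun K : Fin (t+1) → ℕ => K (Fin.last t)) ⁻¹' {c}),
        S.indicator (UtTerm q x t) ↑b) by
    rw [hfun]; exact hf
  funext N
  rw [← BB_eq hq hq1, tsum_subtype ((fun K : Fin (t+1) → ℕ => K (Fin.last t)) ⁻¹' {N})
    (S.indicator (UtTerm q x t))]
  rw [tsum_eq_sum (s := (Fintype.piFinset (fun _ : Fin (t+1) => Icc 1 N)).filter
    (fun K => K (Fin.last t) = N)), Finset.mul_sum]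
  · apply Finset.sum_congr rfl
    intro K hK
    rw [Finset.mem_filter, Fintype.mem_piFinset] at hK
    rw [Set.indicator_of_mem (by exact hK.2)]
    by_cases hKS : K ∈ S
    · rw [Set.indicator_of_mem hKS]
      unfold UtTerm WW
      rw [hK.2]
    · rw [Set.indicator_of_notMem hKS, UtProd_eq_zero, mul_zero]
      intro h
      apply hKS
      have := hK.1 0
      rw [Finset.mem_Icc] at this
      exact ⟨h, this.1⟩
  · intro K hK
    by_cases h1 : K ∈ ((fun K : Fin (t+1) → ℕ => K (Fin.last t)) ⁻¹' {N})
    · rw [Set.indicator_of_mem h1, Set.indicator_of_notMem]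
      intro h2
      apply hK
      rw [Finset.mem_filter, Fintype.mem_piFinset]
      have hl : K (Fin.last t) = N := h1
      refine ⟨fun i => ?_, hl⟩
      have hm : Monotone K := Fin.monotone_iff_le_succ.mpr h2.1
      rw [Finset.mem_Icc]
      exact ⟨h2.2.trans (hm (Fin.zero_le i)), hl ▸ hm (Fin.le_last i)⟩
    · rw [Set.indicator_of_notMem h1]

theorem AA_zero (q : ℂ) (t : ℕ) : AA q t 0 = 0 := by simp [AA]

theorem Ut_eq {q x : ℂ} (hq : q ≠ 0) (hq1 : ‖q‖ < 1) (hx : x ≠ 0)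
    (h1 : ∀ n : ℕ, 1 ≤ n → 1 - x * q^n ≠ 0) (h2 : ∀ n : ℕ, 1 ≤ n → 1 - q^n / x ≠ 0) (t : ℕ)
    (hc : Summable (fun n => ‖AA q t n * q^n / ((1 - x * q^n) * (1 - q^n / x))‖)) :
    (∑' k : {k : Fin (t+1) → ℕ // (∀ i : Fin t, k i.castSucc ≤ k i.succ) ∧ 1 ≤ k 0},
        UtTerm q x t k.1) =
    (∑' n, AA q t n * q^n / ((1 - x * q^n) * (1 - q^n / x))) *
      (qPochInf q (x * q) * qPochInf q (q / x) / (qPochInf q q * qPochInf q q)) := by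
  have hS := (Filter.tendsto_add_atTop_iff_nat 1).mpr (Ut_hasSum hq hq1 x t).tendsto_sum_nat
  simp only [finite_id hq1 hx h1 h2 (AA q t) (AA_zero q t)] at hS
  refine tendsto_nhds_unique hS ?_
  obtain ⟨C1, h10, hC1⟩ := qPoch_bdd hq1 (x*q)
  obtain ⟨C2, h20, hC2⟩ := qPoch_bdd hq1 (q/x)
  obtain ⟨C3, h30, hC3⟩ := Qn_inv_bdd hq1
  rw [← tsum_mul_right]
  have key := tendsto_tsum_of_dominated_convergence (𝓕 := Filter.atTop)
    (f := fun (J n : ℕ) => if n ∈ range (J+1) then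
      AA q t n * q^n / ((1 - x * q^n) * (1 - q^n / x)) *
      (qPoch q (x * q) J * qPoch q (q / x) J / (Qn q (J-n) * Qn q (J+n))) else 0)
    (g := fun n => AA q t n * q^n / ((1 - x * q^n) * (1 - q^n / x)) *
      (qPochInf q (x * q) * qPochInf q (q / x) / (qPochInf q q * qPochInf q q)))
    (hc.mul_right (C1 * C2 * (C3 * C3))) ?_ ?_
  · convert key using 2 with J
    rw [tsum_eq_sum (s := range (J+1))]
    · apply Finset.sum_congr rfl
      intro n hn
      rw [if_pos hn]
    · intro n hn
      rw [if_neg hn]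
  · intro n
    have hlim : Filter.Tendsto (fun J => AA q t n * q^n / ((1 - x * q^n) * (1 - q^n / x)) *
      (qPoch q (x * q) J * qPoch q (q / x) J / (Qn q (J-n) * Qn q (J+n)))) Filter.atTop
      (nhds (AA q t n * q^n / ((1 - x * q^n) * (1 - q^n / x)) *
      (qPochInf q (x * q) * qPochInf q (q / x) / (qPochInf q q * qPochInf q q)))) := by
      apply Filter.Tendsto.const_mul
      apply Filter.Tendsto.div
      · exact (qPoch_tendsto hq1 _).mul (qPoch_tendsto hq1 _)
      · exact ((Qn_tendsto hq1).comp (Filter.tendsto_sub_atTop_nat n)).mul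
          ((Qn_tendsto hq1).comp (Filter.tendsto_add_atTop_nat n))
      · exact mul_ne_zero (qPochInf_self_ne hq1) (qPochInf_self_ne hq1)
    apply hlim.congr'
    filter_upwards [Filter.eventually_ge_atTop n] with J hJ
    rw [if_pos (by simp; omega)]
  · apply Filter.Eventually.of_forall
    intro J n
    by_cases hn : n ∈ range (J+1)
    · rw [if_pos hn, norm_mul]
      apply mul_le_mul_of_nonneg_left _ (norm_nonneg _)
      rw [div_eq_mul_inv, mul_inv, norm_mul, norm_mul, norm_mul]
      gcongr
      · exact hC1 _
      · exact hC2 _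
      · exact hC3 _
      · exact hC3 _
    · rw [if_neg hn, norm_zero]; positivity

/-- triangular numbers -/
def tri (m : ℤ) : ℤ := m * (m+1) / 2

theorem tri_two (m : ℤ) : tri m * 2 = m * (m+1) := by
  unfold tri
  exact Int.ediv_mul_cancel (Int.even_mul_succ_self m).two_dvd

/-- Hecke exponent -/
def EE (T ν m : ℤ) : ℤ := (T+1) * ν^2 - T + m - (2*T+1) * tri m

theorem EE_ge {T ν m : ℤ} (hT : 1 ≤ T) (hν : 1 ≤ ν) (h1 : -ν ≤ m) (h2 : m ≤ ν - 1) :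
    ν - 1 ≤ EE T ν m := by
  have ht := tri_two m
  have a1 : 0 ≤ (m+ν)*(ν-1-m) := mul_nonneg (by linarith) (by linarith)
  have a2 : 0 ≤ (2*T+1)*((m+ν)*(ν-1-m)) := mul_nonneg (by linarith) a1
  have a3 : 0 ≤ (ν-1)*(ν+2*T-2) := mul_nonneg (by linarith) (by linarith)
  have a4 : 2 * EE T ν m = 2*(T+1)*ν^2 - 2*T + 2*m - (2*T+1)*(m*(m+1)) := by
    unfold EE; rw [← ht]; ring
  nlinarith

/-- inner Hecke numerators -/
noncomputable def hn (q : ℂ) (T ν m : ℤ) : ℂ := (-1)^m * q^(EE T ν m)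

theorem hecke_pos (q x : ℂ) (T : ℤ) (n j : ℕ) :
    heckeTerm q x T ((j:ℤ), 2*(n:ℤ)+1-j) =
      hn q T (n+1) ((j:ℤ)-(n+1)) / (1 - x * q^((n:ℤ)+1)) := by
  unfold heckeTerm hn
  have ht := tri_two ((j:ℤ)-(n+1))
  congr 1
  · congr 2
    · dsimp only; omega
    · dsimp only
      apply Int.ediv_eq_of_eq_mul_left (by norm_num)
      unfold EE
      linear_combination (8*T+4) * ht
  · congr 3
    dsimp only; omega

theorem hecke_neg (q x : ℂ) (T : ℤ) (n j : ℕ) :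
    heckeTerm q x T (-2*((n:ℤ)+1)+j, -1-(j:ℤ)) =
      hn q T (n+1) ((j:ℤ)-(n+1)) / (1 - x * q^(-((n:ℤ)+1))) := by
  unfold heckeTerm hn
  have ht := tri_two ((j:ℤ)-(n+1))
  congr 1
  · congr 2
    · dsimp only; omega
    · dsimp only
      apply Int.ediv_eq_of_eq_mul_left (by norm_num)
      unfold EE
      linear_combination (8*T+4) * ht
  · congr 3
    dsimp only; omega

theorem hn_norm {q : ℂ} (hq : q ≠ 0) (hq1 : ‖q‖ < 1) {T : ℤ} (hT : 1 ≤ T) (n : ℕ)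
    (j : Fin (2*(n+1))) : ‖hn q T (n+1) (((j:ℕ):ℤ)-(n+1))‖ ≤ ‖q‖^n := by
  unfold hn
  have hj := j.2
  have hE : (n:ℤ) ≤ EE T (n+1) (((j:ℕ):ℤ)-(n+1)) := by
    have := EE_ge (T := T) (ν := (n:ℤ)+1) (m := ((j:ℕ):ℤ)-(n+1)) hT (by omega) (by omega) (by omega)
    linarith
  rw [norm_mul, norm_zpow, norm_neg, norm_one, one_zpow, one_mul, norm_zpow, ← zpow_natCast]
  exact zpow_le_zpow_right_of_le_one₀ (norm_pos_iff.mpr hq) hq1.le hE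

/-- positive quadrant parametrization -/
def posMap (p : Σ n : ℕ, Fin (2*(n+1))) :
    {p : ℤ × ℤ // (0 ≤ p.1 ∧ 0 ≤ p.2) ∧ p.1 % 2 ≠ p.2 % 2} :=
  ⟨(((p.2:ℕ):ℤ), 2*(p.1:ℤ)+1-((p.2:ℕ):ℤ)), by have := p.2.2; dsimp only; omega⟩

/-- negative quadrant parametrization -/
def negMap (p : Σ n : ℕ, Fin (2*(n+1))) :
    {p : ℤ × ℤ // (p.1 < 0 ∧ p.2 < 0) ∧ p.1 % 2 ≠ p.2 % 2} :=
  ⟨(-2*((p.1:ℤ)+1)+((p.2:ℕ):ℤ), -1-((p.2:ℕ):ℤ)), by have := p.2.2; dsimp only; omega⟩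

theorem posMap_bij : Function.Bijective posMap := by
  constructor
  · rintro ⟨n, j⟩ ⟨n', j'⟩ h
    simp only [posMap, Subtype.mk.injEq, Prod.mk.injEq] at h
    have : n = n' := by omega
    subst this
    have : j = j' := Fin.ext (by omega)
    rw [this]
  · rintro ⟨⟨r, s⟩, h⟩
    dsimp only at h
    refine ⟨⟨((r+s-1)/2).toNat, ⟨r.toNat, by omega⟩⟩, ?_⟩
    simp only [posMap, Subtype.mk.injEq, Prod.mk.injEq]
    omega

theorem negMap_bij : Function.Bijective negMap := by
  constructor
  · rintro ⟨n, j⟩ ⟨n', j'⟩ h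
    simp only [negMap, Subtype.mk.injEq, Prod.mk.injEq] at h
    have : n = n' := by omega
    subst this
    have : j = j' := Fin.ext (by omega)
    rw [this]
  · rintro ⟨⟨r, s⟩, h⟩
    dsimp only at h
    refine ⟨⟨((-r-s-3)/2).toNat, ⟨(-1-s).toNat, by omega⟩⟩, ?_⟩
    simp only [negMap, Subtype.mk.injEq, Prod.mk.injEq]
    omega

theorem sigma_summable {r C : ℝ} (h0 : 0 ≤ r) (h1 : r < 1) (f : (Σ n : ℕ, Fin (2*(n+1))) → ℂ)
    (hf : ∀ n j, ‖f ⟨n, j⟩‖ ≤ r^n * C) : Summable (fun p => ‖f p‖) := by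
  rw [summable_sigma_of_nonneg (fun _ => norm_nonneg _)]
  refine ⟨fun n => Summable.of_finite, ?_⟩
  have hg : Summable (fun n : ℕ => ((n:ℝ)^1 * r^n + r^n) * (2 * C)) := by
    apply Summable.mul_right
    apply Summable.add
    · exact summable_pow_mul_geometric_of_norm_lt_one 1 (by rwa [Real.norm_of_nonneg h0])
    · exact summable_geometric_of_lt_one h0 h1
  apply Summable.of_nonneg_of_le _ _ hg
  · intro n; exact tsum_nonneg (fun _ => norm_nonneg _)
  · intro n
    rw [tsum_fintype]
    calc _ ≤ ∑ j : Fin (2*(n+1)), r^n * C := Finset.sum_le_sum (fun j _ => hf n j)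
      _ = _ := by
        rw [Finset.sum_const, Finset.card_univ, Fintype.card_fin, nsmul_eq_mul]
        push_cast; ring

theorem hn_sum {q : ℂ} (hq : q ≠ 0) (T n : ℕ) :
    ∑ j : Fin (2*(n+1)), hn q T (n+1) (((j:ℕ):ℤ)-(n+1)) =
      - q^(((T:ℤ)+1)*((n:ℤ)+1)^2 - T - 1) * sig q T (n+1) := by
  rw [Fin.sum_univ_eq_sum_range (fun j : ℕ => hn q T (n+1) ((j:ℤ)-(n+1))) (2*(n+1)), two_mul,
    Finset.sum_range_add, ← Finset.sum_range_reflect, ← Finset.sum_add_distrib]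
  unfold sig
  rw [Finset.mul_sum]
  apply Finset.sum_congr rfl
  intro m hm
  have hm' : m < n+1 := by simpa using hm
  have e1 : ((n+1-1-m : ℕ) : ℤ) - (n+1) = -1 - m := by omega
  have e2 : ((n+1+m : ℕ) : ℤ) - (n+1) = m := by push_cast; ring
  rw [e1, e2]
  unfold hn gam
  have t1 := tri_two m
  have t2 := tri_two (-1-m)
  have c := choose2_cast m
  have s1 : (-1:ℂ)^(-1-(m:ℤ)) = - (-1)^m := by
    rw [sub_eq_add_neg, zpow_add₀ (by norm_num), zpow_neg _ (m:ℤ), zpow_natCast, zpow_neg_one]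
    rcases neg_one_pow_eq_or ℂ m with h | h <;> rw [h] <;> norm_num
  rw [s1, zpow_natCast]
  have x1 : q^(EE T (n+1) (-1-m)) = q^(((T:ℤ)+1)*((n:ℤ)+1)^2 - T - 1) *
      q ^ ((m.choose 2 : ℤ) - ((T+1 : ℕ):ℤ) * (m * (m+1))) := by
    rw [← zpow_add₀ hq]
    congr 1
    have : (EE T (n+1) (-1-m)) * 2 = (((T:ℤ)+1)*((n:ℤ)+1)^2 - T - 1 +
      ((m.choose 2 : ℤ) - ((T+1 : ℕ):ℤ) * (m * (m+1)))) * 2 := by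
      unfold EE
      push_cast
      linear_combination (-(2*(T:ℤ)+1)) * t2 - c
    linarith
  have x2 : q^(EE T (n+1) m) = q^(EE T (n+1) (-1-m)) * q^(2*m+1) := by
    rw [← zpow_natCast q (2*m+1), ← zpow_add₀ hq]
    congr 1
    have : (EE T (n+1) m) * 2 = (EE T (n+1) (-1-m) + ((2*m+1 : ℕ) : ℤ)) * 2 := by
      unfold EE
      push_cast
      linear_combination (2*(T:ℤ)+1) * (t2 - t1)
    linarith
  rw [x2, x1]
  ring

theorem inv_bdd_pos {q : ℂ} (hq1 : ‖q‖ < 1) (x : ℂ) :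
    ∃ C : ℝ, 0 < C ∧ ∀ n : ℕ, ‖(1 - x * q^((n:ℤ)+1))⁻¹‖ ≤ C := by
  apply bdd_of_tendsto (l := 1)
  have h := (tendsto_pow_atTop_nhds_zero_of_norm_lt_one hq1)
  have h1 := ((Filter.tendsto_add_atTop_iff_nat 1).mpr h).const_mul x
  have h2 := (h1.const_sub 1).inv₀ (by simp)
  simp only [mul_zero, sub_zero, inv_one] at h2
  refine h2.congr (fun n => ?_)
  rw [← zpow_natCast]; push_cast; rfl

theorem inv_bdd_neg {q : ℂ} (hq : q ≠ 0) (hq1 : ‖q‖ < 1) {x : ℂ} (hx : x ≠ 0) :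
    ∃ C : ℝ, 0 < C ∧ ∀ n : ℕ, ‖(1 - x * q^(-((n:ℤ)+1)))⁻¹‖ ≤ C := by
  apply bdd_of_tendsto (l := 0)
  have h := (tendsto_pow_atTop_nhds_zero_of_norm_lt_one hq1)
  have h1 := ((Filter.tendsto_add_atTop_iff_nat 1).mpr h)
  have h2 := h1.div (h1.sub_const x) (by simpa using hx)
  simp only [zero_div] at h2
  refine h2.congr (fun n => ?_)
  have e : q^(-((n:ℤ)+1)) = (q^(n+1))⁻¹ := by
    rw [zpow_neg, ← zpow_natCast]; push_cast; rfl
  rw [e]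
  have : q^(n+1) ≠ 0 := pow_ne_zero _ hq
  rw [show (1 - x * (q^(n+1))⁻¹) = (q^(n+1) - x)/q^(n+1) by field_simp, inv_div]
  rfl

/-- Hecke-type (Appell–Lerch style) expansion of `U_t(-x;q)`
(the paper's `t` is `t+1` here), with absolute convergence of each series. -/
theorem stmt1 (t : ℕ) (q x : ℂ) (hq0 : 0 < ‖q‖) (hq1 : ‖q‖ < 1)
    (hx : x ≠ 0) (hxq : ∀ n : ℤ, n ≠ 0 → x * q ^ n ≠ 1) :
    Summable (fun k : {k : Fin (t+1) → ℕ //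
        (∀ i : Fin t, k i.castSucc ≤ k i.succ) ∧ 1 ≤ k 0} =>
      ‖UtTerm q x t k.1‖) ∧
    Summable (fun p : {p : ℤ × ℤ // (0 ≤ p.1 ∧ 0 ≤ p.2) ∧ p.1 % 2 ≠ p.2 % 2} =>
      ‖heckeTerm q x ((t : ℤ) + 1) p.1‖) ∧
    Summable (fun p : {p : ℤ × ℤ // (p.1 < 0 ∧ p.2 < 0) ∧ p.1 % 2 ≠ p.2 % 2} =>
      ‖heckeTerm q x ((t : ℤ) + 1) p.1‖) ∧
    q ^ (-(t : ℤ) - 1) *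
      ∑' k : {k : Fin (t+1) → ℕ //
          (∀ i : Fin t, k i.castSucc ≤ k i.succ) ∧ 1 ≤ k 0},
        UtTerm q x t k.1 =
    -(qPochInf q (x * q) * qPochInf q (q / x) / (qPochInf q q) ^ 2) *
      ((∑' p : {p : ℤ × ℤ // (0 ≤ p.1 ∧ 0 ≤ p.2) ∧ p.1 % 2 ≠ p.2 % 2},
          heckeTerm q x ((t : ℤ) + 1) p.1) -
       (∑' p : {p : ℤ × ℤ // (p.1 < 0 ∧ p.2 < 0) ∧ p.1 % 2 ≠ p.2 % 2},
          heckeTerm q x ((t : ℤ) + 1) p.1)) := by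
  have hq : q ≠ 0 := norm_pos_iff.mp hq0
  have hT : (1:ℤ) ≤ (t:ℤ)+1 := by omega
  have d1 : ∀ n : ℕ, 1 - x * q^((n:ℤ)+1) ≠ 0 := by
    intro n h
    exact hxq ((n:ℤ)+1) (by omega) (by linear_combination -h)
  have d2 : ∀ n : ℕ, 1 - x * q^(-((n:ℤ)+1)) ≠ 0 := by
    intro n h
    exact hxq (-((n:ℤ)+1)) (by omega) (by linear_combination -h)
  have z1 : ∀ n : ℕ, q^((n:ℤ)+1) = q^(n+1) := by
    intro n; rw [← zpow_natCast]; push_cast; rfl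
  have z2 : ∀ n : ℕ, q^(-((n:ℤ)+1)) = (q^(n+1))⁻¹ := by
    intro n; rw [zpow_neg, z1]
  have h1 : ∀ n : ℕ, 1 ≤ n → 1 - x * q^n ≠ 0 := by
    intro n hn
    obtain ⟨k, rfl⟩ := Nat.exists_eq_add_of_le' hn
    have := d1 k
    rwa [z1] at this
  have h2' : ∀ n : ℕ, q^(n+1) - x ≠ 0 := by
    intro k h
    have := d2 k
    rw [z2] at this
    apply this
    rw [show x = q^(k+1) by linear_combination -h, mul_inv_cancel₀ (pow_ne_zero _ hq), sub_self]
  have h2 : ∀ n : ℕ, 1 ≤ n → 1 - q^n / x ≠ 0 := by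
    intro n hn h
    obtain ⟨k, rfl⟩ := Nat.exists_eq_add_of_le' hn
    apply h2' k
    field_simp at h
    linear_combination -h
  obtain ⟨C1, _, hC1⟩ := inv_bdd_pos hq1 x
  obtain ⟨C2, _, hC2⟩ := inv_bdd_neg hq hq1 hx
  set P : (Σ n : ℕ, Fin (2*(n+1))) → ℂ := fun p => heckeTerm q x ((t:ℤ)+1) (posMap p).1 with hP
  set M : (Σ n : ℕ, Fin (2*(n+1))) → ℂ := fun p => heckeTerm q x ((t:ℤ)+1) (negMap p).1 with hM
  have eP : ∀ n j, P ⟨n, j⟩ = hn q ((t:ℤ)+1) (n+1) (((j:ℕ):ℤ)-(n+1)) / (1 - x * q^((n:ℤ)+1)) :=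
    fun n j => hecke_pos q x _ n j
  have eM : ∀ n j, M ⟨n, j⟩ = hn q ((t:ℤ)+1) (n+1) (((j:ℕ):ℤ)-(n+1)) / (1 - x * q^(-((n:ℤ)+1))) :=
    fun n j => hecke_neg q x _ n j
  have sP : Summable (fun p => ‖P p‖) := by
    apply sigma_summable (norm_nonneg q) hq1 (C := C1)
    intro n j
    rw [eP, div_eq_mul_inv, norm_mul]
    exact mul_le_mul (hn_norm hq hq1 hT n j) (hC1 n) (norm_nonneg _) (by positivity)
  have sM : Summable (fun p => ‖M p‖) := by
    apply sigma_summable (norm_nonneg q) hq1 (C := C2)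
    intro n j
    rw [eM, div_eq_mul_inv, norm_mul]
    exact mul_le_mul (hn_norm hq hq1 hT n j) (hC2 n) (norm_nonneg _) (by positivity)
  have fP : ∑' p : {p : ℤ × ℤ // (0 ≤ p.1 ∧ 0 ≤ p.2) ∧ p.1 % 2 ≠ p.2 % 2},
      heckeTerm q x ((t : ℤ) + 1) p.1 = ∑' n : ℕ, ∑' j, P ⟨n, j⟩ := by
    rw [← sP.of_norm.tsum_sigma]
    exact ((Equiv.ofBijective _ posMap_bij).tsum_eq
      (fun p => heckeTerm q x ((t : ℤ) + 1) p.1)).symm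
  have fM : ∑' p : {p : ℤ × ℤ // (p.1 < 0 ∧ p.2 < 0) ∧ p.1 % 2 ≠ p.2 % 2},
      heckeTerm q x ((t : ℤ) + 1) p.1 = ∑' n : ℕ, ∑' j, M ⟨n, j⟩ := by
    rw [← sM.of_norm.tsum_sigma]
    exact ((Equiv.ofBijective _ negMap_bij).tsum_eq
      (fun p => heckeTerm q x ((t : ℤ) + 1) p.1)).symm
  have gP : Summable (fun n : ℕ => ‖∑' j, P ⟨n, j⟩‖) := by
    apply Summable.of_nonneg_of_le (fun _ => norm_nonneg _) _ sP.sigma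
    intro n
    rw [tsum_fintype, tsum_fintype]
    exact norm_sum_le _ _
  have gM : Summable (fun n : ℕ => ‖∑' j, M ⟨n, j⟩‖) := by
    apply Summable.of_nonneg_of_le (fun _ => norm_nonneg _) _ sM.sigma
    intro n
    rw [tsum_fintype, tsum_fintype]
    exact norm_sum_le _ _
  have key : ∀ n : ℕ, AA q t (n+1) * q^(n+1) / ((1 - x * q^(n+1)) * (1 - q^(n+1) / x)) =
      -q^(t+1) * ((∑' j, P ⟨n, j⟩) - ∑' j, M ⟨n, j⟩) := by
    intro n
    have hs := hn_sum hq (t+1) n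
    push_cast at hs
    rw [tsum_fintype, tsum_fintype, Finset.sum_congr rfl (fun j _ => eP n j),
      Finset.sum_congr rfl (fun j _ => eM n j), ← Finset.sum_div, ← Finset.sum_div, hs]
    have k1 := d1 n
    have k2 := d2 n
    have k3 := h2 (n+1) (by omega)
    have k4 := h2' n
    have k6 : q^(n+1) ≠ 0 := pow_ne_zero _ hq
    have hA : AA q t (n+1) * q^(n+1) = q^(t+1) * q^(((t:ℤ)+1+1)*((n:ℤ)+1)^2 - (t+1) - 1) *
        sig q (t+1) (n+1) * (1 - q^(n+1) * q^(n+1)) := by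
      unfold AA
      have e0 : (n+1)^2-(n+1) = n^2+n := by
        have : (n+1)^2 = n^2+n+(n+1) := by ring
        omega
      rw [e0]
      have e1 : q^(t+1) * q^(((t:ℤ)+1+1)*((n:ℤ)+1)^2 - (t+1) - 1) =
          q^((t+1)*(n+1)^2) * q⁻¹ * q^(n^2+n) * q^(n+1) := by
        rw [← zpow_neg_one, ← zpow_natCast, ← zpow_natCast, ← zpow_natCast, ← zpow_natCast,
          ← zpow_add₀ hq, ← zpow_add₀ hq, ← zpow_add₀ hq, ← zpow_add₀ hq]
        congr 1
        push_cast; ring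
      rw [e1]
      ring
    rw [hA]
    rw [z1] at k1 ⊢
    rw [z2] at k2 ⊢
    generalize q^(((t:ℤ)+1+1)*((n:ℤ)+1)^2 - (t+1) - 1) = Z
    generalize sig q (t+1) (n+1) = σ
    generalize q^(n+1) = a at *
    rw [show 1 - a/x = (x - a)/x by field_simp, show 1 - x * a⁻¹ = (a - x)/a by field_simp]
    have k5 : x - a ≠ 0 := by intro h; apply k4; linear_combination -h
    have k7 : 1 - a * x ≠ 0 := by rw [mul_comm]; exact k1
    rw [show a - x = -(x - a) by ring, mul_comm x a]
    field_simp
    ring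
  have hc : Summable (fun n => ‖AA q t n * q^n / ((1 - x * q^n) * (1 - q^n / x))‖) := by
    rw [← summable_nat_add_iff 1]
    simp only [key]
    apply Summable.of_nonneg_of_le (fun _ => norm_nonneg _) _ ((gP.add gM).mul_left (‖q^(t+1)‖))
    intro n
    rw [norm_mul, norm_neg]
    exact mul_le_mul_of_nonneg_left (norm_sub_le _ _) (norm_nonneg _)
  refine ⟨?_, ?_, ?_, ?_⟩
  · exact (Ut_summable hq1 x t).subtype
      {k | (∀ i : Fin t, k i.castSucc ≤ k i.succ) ∧ 1 ≤ k 0}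
  · exact (Equiv.ofBijective _ posMap_bij).summable_iff.mp sP
  · exact (Equiv.ofBijective _ negMap_bij).summable_iff.mp sM
  · rw [Ut_eq hq hq1 hx h1 h2 t hc, fP, fM, hc.of_norm.tsum_eq_zero_add, AA_zero]
    simp only [key]
    rw [tsum_mul_left, gP.of_norm.tsum_sub gM.of_norm]
    have e : q^(-(t:ℤ)-1) * q^(t+1) = 1 := by
      rw [← zpow_natCast, ← zpow_add₀ hq]
      push_cast
      rw [show -(t:ℤ)-1+((t:ℤ)+1) = 0 by ring, zpow_zero]
    generalize (∑' n : ℕ, ∑' j, P ⟨n, j⟩) - ∑' n : ℕ, ∑' j, M ⟨n, j⟩ = X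
    rw [zero_mul, zero_div, zero_add, ← pow_two (qPochInf q q)]
    linear_combination (-X * (qPochInf q (x * q) * qPochInf q (q / x) / qPochInf q q ^ 2)) * e
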